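/- (Martingale Lemma 1.) Let $B \in \mathbb{N} = \{0,1,2,\dots\}$, and let $(v_k)_{k\ge 0}$, $a_1$ and $(a_{2,k})_{k\ge 0}$ be real random variables on a probability space such that, almost surely, $v_k \ge 0$, $a_1 \ge 0$, $a_{2,k} \ge 0$ and $a_1 + a_{2,k} \le 1$ for every $k$, and the sequence $(a_{2,k})_k$ is nonincreasing. Let $k^* \in \mathbb{N}$ and suppose that, for every $k \ge k^*$, almost surely $$v_{k+1} \le a_1 v_k + a_{2,k} \max_{\max(k-B,0) \le \hat k \le k} v_{\hat k}.$$ Let $\bar k \in \mathbb{N}$ satisfy $\bar k \ge k^*$ and $\bar k \ge B$, and assume $a_1 + a_{2,\bar k} > 0$ almost surely. Set $$\rho := (a_1 + a_{2,\bar k})^{1/(B+1)}, \qquad V_0 := \frac{1}{\rho^{\bar k}} \max_{\bar k - B \le j \le \bar k} v_j .$$ Then, almost surely, $v_{\bar k+m} \le \rho^{\bar k+B+1} V_0$ for every $1 \le m \le B+1$, and $v_k \le \rho^k V_0$ for every $k \ge \bar k + B + 1$. (In particular this covers deterministic sequences, and the same bounds hold with any larger constant in place of $V_0$.) -/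

import Mathlib

/-- The maximum of a real sequence over the delay window `max (k - B) 0 ≤ j ≤ k`
(natural-number subtraction truncates the window at `0`). -/
noncomputable def windowMax (B : ℕ) (v : ℕ → ℝ) (k : ℕ) : ℝ :=
  (Finset.Icc (k - B) k).sup' (Finset.nonempty_Icc.mpr (Nat.sub_le k B)) v

/-- The ratio `ρ = (a₁ + a₂ k̄) ^ (1 / (B + 1))`. -/
noncomputable def decayRatio (B : ℕ) (a₁ : ℝ) (a₂ : ℕ → ℝ) (kbar : ℕ) : ℝ :=
  (a₁ + a₂ kbar) ^ ((1 : ℝ) / ((B : ℝ) + 1))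

/-- The constant `V₀ = (max_{k̄ - B ≤ j ≤ k̄} v j) / ρ ^ k̄`, the least one for which every
term of the window ending at `k̄` is at most `ρ ^ k̄ * V₀`. -/
noncomputable def initialConst (B : ℕ) (v : ℕ → ℝ) (a₁ : ℝ) (a₂ : ℕ → ℝ) (kbar : ℕ) : ℝ :=
  windowMax B v kbar / decayRatio B a₁ a₂ kbar ^ kbar

/-! Both terms of the recursion are controlled by the window maximum `M k`, so from `k̄` on
`v (k + 1) ≤ c * M k` with `c = a₁ + a₂ k̄ ≤ 1`. By strong induction every value after `n ≥ k̄` is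
at most `c * M n`. After `B + 1` further steps the window consists of such values only, hence
`M (n + (B + 1)) ≤ c * M n`: the maximum contracts by `c = ρ ^ (B + 1)` per block of `B + 1` steps,
which is the rate `ρ` per step. -/

section WindowMax

variable {B k : ℕ} {v : ℕ → ℝ}

theorem windowMax_le {C : ℝ} (h : ∀ j, k - B ≤ j → j ≤ k → v j ≤ C) : windowMax B v k ≤ C :=
  Finset.sup'_le _ _ fun j hj => h j (Finset.mem_Icc.mp hj).1 (Finset.mem_Icc.mp hj).2

theorem le_windowMax {j : ℕ} (hj : k - B ≤ j) (hjk : j ≤ k) : v j ≤ windowMax B v k :=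
  Finset.le_sup' v (Finset.mem_Icc.mpr ⟨hj, hjk⟩)

theorem self_le_windowMax : v k ≤ windowMax B v k :=
  le_windowMax (Nat.sub_le k B) le_rfl

theorem windowMax_nonneg (hv : 0 ≤ v k) : 0 ≤ windowMax B v k :=
  hv.trans self_le_windowMax

theorem mul_add_mul_windowMax_le {a b b' : ℝ} (hv : 0 ≤ v k) (ha : 0 ≤ a) (hb : b ≤ b') :
    a * v k + b * windowMax B v k ≤ (a + b') * windowMax B v k := by
  rw [add_mul]
  exact add_le_add (mul_le_mul_of_nonneg_left self_le_windowMax ha)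
    (mul_le_mul_of_nonneg_right hb (windowMax_nonneg hv))

end WindowMax

section DelayedContraction

variable {B n : ℕ} {v : ℕ → ℝ}

theorem le_mul_windowMax_of_delayed_contraction {c : ℝ} (hc₀ : 0 ≤ c) (hc₁ : c ≤ 1)
    (hn : 0 ≤ windowMax B v n) (hstep : ∀ k, n ≤ k → v (k + 1) ≤ c * windowMax B v k)
    {k : ℕ} (hk : n < k) : v k ≤ c * windowMax B v n := by
  induction k using Nat.strong_induction_on with
  | _ k ih =>
    obtain ⟨l, rfl⟩ := Nat.exists_eq_add_one_of_ne_zero (Nat.ne_zero_of_lt hk)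
    have hwindow : windowMax B v l ≤ windowMax B v n := by
      refine windowMax_le fun j hj hjl => ?_
      rcases le_or_gt j n with hjn | hnj
      · exact le_windowMax (by omega) hjn
      · exact (ih j (by omega) hnj).trans (mul_le_of_le_one_left hn hc₁)
    exact (hstep l (by omega)).trans (mul_le_mul_of_nonneg_left hwindow hc₀)

theorem windowMax_add_mul_le_pow_mul_windowMax {c : ℝ} (hc₀ : 0 ≤ c) (hc₁ : c ≤ 1)
    (hv : ∀ k, n ≤ k → 0 ≤ v k) (hstep : ∀ k, n ≤ k → v (k + 1) ≤ c * windowMax B v k)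
    (q : ℕ) : windowMax B v (n + (B + 1) * q) ≤ c ^ q * windowMax B v n := by
  induction q with
  | zero => simp
  | succ q ih =>
    have hblock : windowMax B v (n + (B + 1) * (q + 1)) ≤
        c * windowMax B v (n + (B + 1) * q) := by
      refine windowMax_le fun j hj _ => le_mul_windowMax_of_delayed_contraction hc₀ hc₁
        (windowMax_nonneg (hv _ (Nat.le_add_right n _)))
        (fun k hk => hstep k ((Nat.le_add_right n _).trans hk)) ?_
      rw [mul_add_one] at hj
      omega
    calc windowMax B v (n + (B + 1) * (q + 1))
        ≤ c * windowMax B v (n + (B + 1) * q) := hblock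
      _ ≤ c * (c ^ q * windowMax B v n) := mul_le_mul_of_nonneg_left ih hc₀
      _ = c ^ (q + 1) * windowMax B v n := by ring

theorem le_pow_mul_windowMax_of_delayed_contraction {r : ℝ} (hr₀ : 0 ≤ r) (hr₁ : r ≤ 1)
    (hv : ∀ k, n ≤ k → 0 ≤ v k)
    (hstep : ∀ k, n ≤ k → v (k + 1) ≤ r ^ (B + 1) * windowMax B v k) (m : ℕ) :
    v (n + m) ≤ r ^ m * windowMax B v n := by
  -- Rounding `m` up to a multiple of `B + 1` puts `n + m` into the window ending there.
  obtain ⟨q, hmq, hqm⟩ : ∃ q, m ≤ (B + 1) * q ∧ (B + 1) * q ≤ m + B := by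
    have hdiv := Nat.div_add_mod (m + B) (B + 1)
    have hmod : (m + B) % (B + 1) < B + 1 := Nat.mod_lt _ B.succ_pos
    exact ⟨(m + B) / (B + 1), by omega, by omega⟩
  calc v (n + m) ≤ windowMax B v (n + (B + 1) * q) := le_windowMax (by omega) (by omega)
    _ ≤ (r ^ (B + 1)) ^ q * windowMax B v n :=
      windowMax_add_mul_le_pow_mul_windowMax (pow_nonneg hr₀ _) (pow_le_one₀ hr₀ hr₁) hv hstep q
    _ = r ^ ((B + 1) * q) * windowMax B v n := by rw [pow_mul]
    _ ≤ r ^ m * windowMax B v n :=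
      mul_le_mul_of_nonneg_right (pow_le_pow_of_le_one hr₀ hr₁ hmq)
        (windowMax_nonneg (hv n le_rfl))

end DelayedContraction

section DecayRatio

variable {B kbar : ℕ} {a₁ : ℝ} {a₂ : ℕ → ℝ}

theorem decayRatio_pos (h : 0 < a₁ + a₂ kbar) : 0 < decayRatio B a₁ a₂ kbar :=
  Real.rpow_pos_of_pos h _

theorem decayRatio_le_one (h₀ : 0 ≤ a₁ + a₂ kbar) (h₁ : a₁ + a₂ kbar ≤ 1) :
    decayRatio B a₁ a₂ kbar ≤ 1 :=
  Real.rpow_le_one h₀ h₁ (by positivity)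

theorem decayRatio_pow_succ (h : 0 ≤ a₁ + a₂ kbar) :
    decayRatio B a₁ a₂ kbar ^ (B + 1) = a₁ + a₂ kbar := by
  simpa [decayRatio] using Real.rpow_inv_natCast_pow h B.succ_ne_zero

theorem decayRatio_pow_add_mul_initialConst (v : ℕ → ℝ) (h : 0 < a₁ + a₂ kbar) (m : ℕ) :
    decayRatio B a₁ a₂ kbar ^ (kbar + m) * initialConst B v a₁ a₂ kbar =
      decayRatio B a₁ a₂ kbar ^ m * windowMax B v kbar := by
  have hρ : decayRatio B a₁ a₂ kbar ≠ 0 := (decayRatio_pos h).ne'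
  rw [initialConst, pow_add]
  field_simp

end DecayRatio

theorem geometric_decay_of_delayed_recursion {B kbar : ℕ} {v a₂ : ℕ → ℝ} {a₁ : ℝ}
    (hv : ∀ k, kbar ≤ k → 0 ≤ v k) (ha₁ : 0 ≤ a₁) (ha₂ : ∀ k, kbar ≤ k → a₂ k ≤ a₂ kbar)
    (hsum : a₁ + a₂ kbar ≤ 1)
    (hrec : ∀ k, kbar ≤ k → v (k + 1) ≤ a₁ * v k + a₂ k * windowMax B v k)
    (hpos : 0 < a₁ + a₂ kbar) :
    (∀ k, kbar < k →
      v k ≤ decayRatio B a₁ a₂ kbar ^ (kbar + B + 1) * initialConst B v a₁ a₂ kbar) ∧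
    (∀ k, kbar ≤ k → v k ≤ decayRatio B a₁ a₂ kbar ^ k * initialConst B v a₁ a₂ kbar) := by
  have hstep : ∀ k, kbar ≤ k → v (k + 1) ≤ (a₁ + a₂ kbar) * windowMax B v k := fun k hk =>
    (hrec k hk).trans (mul_add_mul_windowMax_le (hv k hk) ha₁ (ha₂ k hk))
  constructor
  · intro k hk
    rw [add_assoc, decayRatio_pow_add_mul_initialConst v hpos, decayRatio_pow_succ hpos.le]
    exact le_mul_windowMax_of_delayed_contraction hpos.le hsum
      (windowMax_nonneg (hv kbar le_rfl)) hstep hk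
  · intro k hk
    obtain ⟨m, rfl⟩ := Nat.exists_eq_add_of_le hk
    rw [decayRatio_pow_add_mul_initialConst v hpos]
    exact le_pow_mul_windowMax_of_delayed_contraction (decayRatio_pos hpos).le
      (decayRatio_le_one hpos.le hsum) hv (by rwa [decayRatio_pow_succ hpos.le]) m

theorem martingale_lemma_one_general
    {Ω : Type*} [MeasurableSpace Ω] (μ : MeasureTheory.Measure Ω)
    (B : ℕ) (v : ℕ → Ω → ℝ) (a₁ : Ω → ℝ) (a₂ : ℕ → Ω → ℝ) (kbar : ℕ)
    (hv : ∀ k, kbar ≤ k → ∀ᵐ ω ∂μ, 0 ≤ v k ω)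
    (ha₁ : ∀ᵐ ω ∂μ, 0 ≤ a₁ ω)
    (ha₂ : ∀ k, kbar ≤ k → ∀ᵐ ω ∂μ, a₂ k ω ≤ a₂ kbar ω)
    (hsum : ∀ᵐ ω ∂μ, a₁ ω + a₂ kbar ω ≤ 1)
    (hrec : ∀ k, kbar ≤ k → ∀ᵐ ω ∂μ,
      v (k + 1) ω ≤ a₁ ω * v k ω + a₂ k ω * windowMax B (fun j => v j ω) k)
    (hpos : ∀ᵐ ω ∂μ, 0 < a₁ ω + a₂ kbar ω) :
    ∀ᵐ ω ∂μ,
      (∀ k, kbar < k →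
        v k ω ≤
          decayRatio B (a₁ ω) (fun k => a₂ k ω) kbar ^ (kbar + B + 1) *
            initialConst B (fun k => v k ω) (a₁ ω) (fun k => a₂ k ω) kbar) ∧
      (∀ k, kbar ≤ k →
        v k ω ≤
          decayRatio B (a₁ ω) (fun k => a₂ k ω) kbar ^ k *
            initialConst B (fun k => v k ω) (a₁ ω) (fun k => a₂ k ω) kbar) := by
  simp only [← MeasureTheory.ae_all_iff] at hv ha₂ hrec
  filter_upwards [hv, ha₁, ha₂, hsum, hrec, hpos] with ω hvω ha₁ω ha₂ω hsumω hrecω hposω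
  exact geometric_decay_of_delayed_recursion hvω ha₁ω ha₂ω hsumω hrecω hposω

/-- A nonnegative random sequence with the almost sure delayed recursion
`v (k+1) ≤ a₁ v k + a₂ k · max_{k-B ≤ j ≤ k} v j` decays geometrically almost surely. No
measurability of the random variables is needed. -/
theorem martingale_lemma_one
    {Ω : Type*} [MeasurableSpace Ω] (μ : MeasureTheory.Measure Ω)
    [MeasureTheory.IsProbabilityMeasure μ]
    (B : ℕ) (v : ℕ → Ω → ℝ) (a₁ : Ω → ℝ) (a₂ : ℕ → Ω → ℝ)
    (hv : ∀ k, ∀ᵐ ω ∂μ, 0 ≤ v k ω)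
    (ha₁ : ∀ᵐ ω ∂μ, 0 ≤ a₁ ω)
    (ha₂ : ∀ k, ∀ᵐ ω ∂μ, 0 ≤ a₂ k ω)
    (ha₂anti : ∀ᵐ ω ∂μ, Antitone (fun k => a₂ k ω))
    (hsum : ∀ k, ∀ᵐ ω ∂μ, a₁ ω + a₂ k ω ≤ 1)
    (kstar : ℕ)
    (hrec : ∀ k, kstar ≤ k → ∀ᵐ ω ∂μ,
      v (k + 1) ω ≤ a₁ ω * v k ω + a₂ k ω * windowMax B (fun j => v j ω) k)
    (kbar : ℕ) (hkbar₁ : kstar ≤ kbar) (hkbar₂ : B ≤ kbar)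
    (hpos : ∀ᵐ ω ∂μ, 0 < a₁ ω + a₂ kbar ω) :
    ∀ᵐ ω ∂μ,
      (∀ m, 1 ≤ m → m ≤ B + 1 →
        v (kbar + m) ω ≤
          decayRatio B (a₁ ω) (fun k => a₂ k ω) kbar ^ (kbar + B + 1) *
            initialConst B (fun k => v k ω) (a₁ ω) (fun k => a₂ k ω) kbar) ∧
      (∀ k, kbar + B + 1 ≤ k →
        v k ω ≤
          decayRatio B (a₁ ω) (fun k => a₂ k ω) kbar ^ k *
            initialConst B (fun k => v k ω) (a₁ ω) (fun k => a₂ k ω) kbar) :=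
  (martingale_lemma_one_general μ B v a₁ a₂ kbar (fun k _ => hv k) ha₁
    (fun _ hk => ha₂anti.mono fun _ h => h hk) (hsum kbar)
    (fun k hk => hrec k (hkbar₁.trans hk)) hpos).mono
    fun _ h => ⟨fun m hm _ => h.1 _ (by omega), fun k hk => h.2 k (by omega)⟩
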